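/- Let G be a simple graph on n ≥ 2 vertices with m edges, let ρ = m / C(n,2) be its edge density, and let k > 0 be the real number determined by n/k − 1 = (1−ρ)(n−1). Then the number of triangles (3-cliques) of G is at least (1/6)·n·(n − n/k)·(n − 2n/k). -/

import Mathlib

open Finset

/-!
Two adjacent vertices `u` and `v` have at least `deg u + deg v - n` common neighbours, each of which
completes the edge to a triangle. Summing over the darts counts every triangle six times and turns
the degrees into `2 ∑ deg²`, which is at least `2 (2m)² / n` by Cauchy–Schwarz. The parameter `k` is
chosen so that the average degree `2m / n` is `n - n / k`.
-/

section

variable {V : Type*} [Fintype V] (G : SimpleGraph V) [DecidableRel G.Adj]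

section Dart

variable {M : Type*} [AddCommMonoid M] (f : V → M)

lemma sum_dart_fst : ∑ d : G.Dart, f d.fst = ∑ v, G.degree v • f v := by
  classical
  simp only [← G.dart_fst_fiber_card_eq_degree, ← sum_const]
  exact (sum_fiberwise' univ (fun d : G.Dart ↦ d.fst) f).symm

lemma sum_dart_snd : ∑ d : G.Dart, f d.snd = ∑ v, G.degree v • f v := by
  rw [← sum_dart_fst]
  exact SimpleGraph.Dart.symm_involutive.bijective.sum_comp fun d : G.Dart ↦ f d.fst

end Dart

variable [DecidableEq V]

lemma degree_add_degree_le_card_add_card_inter_neighborFinset (u v : V) :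
    G.degree u + G.degree v ≤ Fintype.card V + #(G.neighborFinset u ∩ G.neighborFinset v) := by
  rw [← G.card_neighborFinset_eq_degree, ← G.card_neighborFinset_eq_degree,
    ← card_union_add_card_inter]
  gcongr
  exact card_le_univ _

variable {G}

lemma card_filter_dart_mem_of_isClique {s : Finset V} (hs : G.IsClique s) :
    #{d : G.Dart | d.fst ∈ s ∧ d.snd ∈ s} = #s.offDiag := by
  refine card_bij (fun d _ ↦ d.toProd) ?_ (fun _ _ _ _ ↦ SimpleGraph.Dart.ext _ _) ?_
  · intro d hd
    obtain ⟨hfst, hsnd⟩ := (mem_filter.1 hd).2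
    exact mem_offDiag.2 ⟨hfst, hsnd, d.fst_ne_snd⟩
  · rintro ⟨u, v⟩ huv
    obtain ⟨hu, hv, hne⟩ := mem_offDiag.1 huv
    exact ⟨⟨(u, v), hs hu hv hne⟩, mem_filter.2 ⟨mem_univ _, hu, hv⟩, rfl⟩

lemma card_filter_cliqueFinset_three_of_adj {u v : V} (huv : G.Adj u v) :
    #{s ∈ G.cliqueFinset 3 | u ∈ s ∧ v ∈ s} = #(G.neighborFinset u ∩ G.neighborFinset v) := by
  symm
  refine card_bij (fun w _ ↦ {u, v, w}) ?_ ?_ ?_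
  · intro w hw
    simp only [mem_inter, SimpleGraph.mem_neighborFinset] at hw
    simp [SimpleGraph.is3Clique_triple_iff, huv, hw]
  · intro w hw w' hw' h
    simp only [mem_inter, SimpleGraph.mem_neighborFinset] at hw hw'
    have hmem : w ∈ ({u, v, w'} : Finset V) := h ▸ by simp
    simpa [hw.1.ne', hw.2.ne'] using hmem
  · intro s hs
    obtain ⟨hclique, hu, hv⟩ := mem_filter.1 hs
    rw [SimpleGraph.mem_cliqueFinset_iff] at hclique
    have hv' : v ∈ s.erase u := mem_erase.2 ⟨huv.ne', hv⟩
    obtain ⟨w, hw⟩ : ∃ w, (s.erase u).erase v = {w} := by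
      rw [← card_eq_one, card_erase_of_mem hv', card_erase_of_mem hu, hclique.card_eq]
    have hs_eq : {u, v, w} = s := by rw [← hw, insert_erase hv', insert_erase hu]
    obtain ⟨-, huw, hvw⟩ := SimpleGraph.is3Clique_triple_iff.1 (hs_eq ▸ hclique)
    exact ⟨w, by simp [huw, hvw], hs_eq⟩

variable (G)

theorem sum_dart_card_inter_neighborFinset :
    ∑ d : G.Dart, #(G.neighborFinset d.fst ∩ G.neighborFinset d.snd) =
      6 * #(G.cliqueFinset 3) := by
  calc
    _ = ∑ d : G.Dart, #{s ∈ G.cliqueFinset 3 | d.fst ∈ s ∧ d.snd ∈ s} :=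
      sum_congr rfl fun d _ ↦ (card_filter_cliqueFinset_three_of_adj d.adj).symm
    _ = ∑ s ∈ G.cliqueFinset 3, #{d : G.Dart | d.fst ∈ s ∧ d.snd ∈ s} :=
      sum_card_bipartiteAbove_eq_sum_card_bipartiteBelow
        fun (d : G.Dart) (s : Finset V) ↦ d.fst ∈ s ∧ d.snd ∈ s
    _ = ∑ s ∈ G.cliqueFinset 3, 6 := sum_congr rfl fun s hs ↦ by
      have hclique := SimpleGraph.mem_cliqueFinset_iff.1 hs
      rw [card_filter_dart_mem_of_isClique hclique.isClique, offDiag_card, hclique.card_eq]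
    _ = 6 * #(G.cliqueFinset 3) := by rw [sum_const, smul_eq_mul, mul_comm]

theorem sum_degree_sq_le :
    ∑ v, G.degree v ^ 2 ≤ Fintype.card V * #G.edgeFinset + 3 * #(G.cliqueFinset 3) := by
  have hsum : 2 * ∑ v, G.degree v ^ 2 ≤
      2 * (Fintype.card V * #G.edgeFinset) + 6 * #(G.cliqueFinset 3) := calc
    _ = ∑ d : G.Dart, (G.degree d.fst + G.degree d.snd) := by
      rw [sum_add_distrib, sum_dart_fst G fun v ↦ G.degree v, sum_dart_snd G fun v ↦ G.degree v]
      simp only [smul_eq_mul, sq, two_mul]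
    _ ≤ ∑ d : G.Dart,
        (Fintype.card V + #(G.neighborFinset d.fst ∩ G.neighborFinset d.snd)) :=
      sum_le_sum fun d _ ↦ degree_add_degree_le_card_add_card_inter_neighborFinset G d.fst d.snd
    _ = 2 * (Fintype.card V * #G.edgeFinset) + 6 * #(G.cliqueFinset 3) := by
      rw [sum_add_distrib, sum_dart_card_inter_neighborFinset, sum_const, card_univ,
        G.dart_card_eq_twice_card_edges, smul_eq_mul]
      ring
  lia

theorem four_mul_card_edgeFinset_sq_le :
    4 * #G.edgeFinset ^ 2 ≤
      Fintype.card V * (Fintype.card V * #G.edgeFinset + 3 * #(G.cliqueFinset 3)) :=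
  calc
    4 * #G.edgeFinset ^ 2 = (∑ v, G.degree v) ^ 2 := by
      rw [G.sum_degrees_eq_twice_card_edges]
      ring
    _ ≤ Fintype.card V * ∑ v, G.degree v ^ 2 := sq_sum_le_card_mul_sum_sq
    _ ≤ _ := Nat.mul_le_mul_left _ (sum_degree_sq_le G)

theorem goodman_bound_independent_sets_form_general {n : ℕ} (hV : Fintype.card V = n) (hn : 2 ≤ n)
    {m ρ k : ℝ} (hm : m = (#G.edgeFinset : ℝ)) (hρ : ρ = m / (n.choose 2 : ℝ))
    (hkdef : (n : ℝ) / k - 1 = (1 - ρ) * ((n : ℝ) - 1)) :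
    (#(G.cliqueFinset 3) : ℝ) ≥
      (1 / 6) * (n : ℝ) * ((n : ℝ) - (n : ℝ) / k) * ((n : ℝ) - 2 * ((n : ℝ) / k)) := by
  have hn_two : (2 : ℝ) ≤ n := mod_cast hn
  have hn_pos : (0 : ℝ) < n := by linarith
  have hedges : 4 * m ^ 2 ≤ n * (n * m + 3 * #(G.cliqueFinset 3)) := by
    rw [hm, ← hV]
    exact_mod_cast four_mul_card_edgeFinset_sq_le G
  have hm_density : m = ρ * (n * (n - 1) / 2) := by
    have hn_sub_one : (n : ℝ) - 1 ≠ 0 := by linarith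
    rw [hρ, Nat.cast_choose_two]
    field_simp
  have hm_parts : m = n * (n - n / k) / 2 := by
    linear_combination hm_density + (n / 2 : ℝ) * hkdef
  rw [hm_parts] at hedges
  refine le_of_mul_le_mul_left ?_ hn_pos
  linear_combination hedges / 3

end

theorem goodman_bound_independent_sets_form (n : ℕ) (hn : 2 ≤ n)
    (G : SimpleGraph (Fin n)) [DecidableRel G.Adj] (m ρ k : ℝ)
    (hm : m = (G.edgeFinset.card : ℝ)) (hρ : ρ = m / (n.choose 2 : ℝ))
    (hk : 0 < k) (hkdef : (n : ℝ) / k - 1 = (1 - ρ) * ((n : ℝ) - 1)) :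
    ((G.cliqueFinset 3).card : ℝ) ≥
      (1 / 6) * (n : ℝ) * ((n : ℝ) - (n : ℝ) / k) * ((n : ℝ) - 2 * ((n : ℝ) / k)) :=
  goodman_bound_independent_sets_form_general G (Fintype.card_fin n) hn hm hρ hkdef
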